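/- Two types in a subtype relation have exactly the same set of capabilities: if 𝒞 ⊢ α ⊑ β for derived type variables α, β, then for every word w ∈ Σ*, 𝒞 ⊢ VAR α.w if and only if 𝒞 ⊢ VAR β.w. -/

import Mathlib

/-- The two-element sign monoid `{⊕, ⊖}` of variances. -/
inductive Sign : Type where
  | pos
  | neg
deriving DecidableEq, Repr

/-- Multiplication in the sign monoid (`⊕` is the identity, `⊖ · ⊖ = ⊕`). -/
def Sign.mul : Sign → Sign → Sign
  | .pos, s => s
  | .neg, .pos => .neg
  | .neg, .neg => .pos

/-- Variance of a word in `Σ*`: `⟨ε⟩ = ⊕`, `⟨xw⟩ = ⟨x⟩·⟨w⟩`. -/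
def wordSign {L : Type} (sgn : L → Sign) : List L → Sign
  | [] => .pos
  | x :: w => (sgn x).mul (wordSign sgn w)

/-- A derived type variable `α.w` with base type variable `α ∈ 𝒱` and word `w ∈ Σ*`. -/
structure DTV (V L : Type) : Type where
  base : V
  word : List L

/-- Appending a single field label to a derived type variable: `α.ℓ`. -/
def DTV.app {V L : Type} (α : DTV V L) (ℓ : L) : DTV V L :=
  ⟨α.base, α.word ++ [ℓ]⟩

/-- A constraint: either `VAR X` or `X ⊑ Y` for derived type variables. -/
inductive Constraint (V L : Type) : Type where
  | var : DTV V L → Constraint V L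
  | sub : DTV V L → DTV V L → Constraint V L

/-- Entailment `𝒞 ⊢ c`: the least relation containing `𝒞` and closed under the
deduction rules T-Left, T-Right, T-InheritL, T-InheritR, T-Prefix, S-Refl,
S-Trans, S-Field⊕, S-Field⊖ and S-Pointer. -/
inductive Entails {V L : Type} (sgn : L → Sign) (load store : L)
    (C : Set (Constraint V L)) : Constraint V L → Prop where
  | ax {c} : c ∈ C → Entails sgn load store C c
  | tLeft {α β} : Entails sgn load store C (.sub α β) →
      Entails sgn load store C (.var α)
  | tRight {α β} : Entails sgn load store C (.sub α β) →
      Entails sgn load store C (.var β)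
  | tInheritL {α β : DTV V L} {ℓ} : Entails sgn load store C (.sub α β) →
      Entails sgn load store C (.var (α.app ℓ)) →
      Entails sgn load store C (.var (β.app ℓ))
  | tInheritR {α β : DTV V L} {ℓ} : Entails sgn load store C (.sub α β) →
      Entails sgn load store C (.var (β.app ℓ)) →
      Entails sgn load store C (.var (α.app ℓ))
  | tPrefix {α : DTV V L} {ℓ} : Entails sgn load store C (.var (α.app ℓ)) →
      Entails sgn load store C (.var α)
  | sRefl {α} : Entails sgn load store C (.var α) →
      Entails sgn load store C (.sub α α)
  | sTrans {α β γ} : Entails sgn load store C (.sub α β) →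
      Entails sgn load store C (.sub β γ) →
      Entails sgn load store C (.sub α γ)
  | sFieldPos {α β : DTV V L} {ℓ} : Entails sgn load store C (.sub α β) →
      Entails sgn load store C (.var (β.app ℓ)) → sgn ℓ = .pos →
      Entails sgn load store C (.sub (α.app ℓ) (β.app ℓ))
  | sFieldNeg {α β : DTV V L} {ℓ} : Entails sgn load store C (.sub α β) →
      Entails sgn load store C (.var (β.app ℓ)) → sgn ℓ = .neg →
      Entails sgn load store C (.sub (β.app ℓ) (α.app ℓ))
  | sPointer {α : DTV V L} : Entails sgn load store C (.var (α.app load)) →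
      Entails sgn load store C (.var (α.app store)) →
      Entails sgn load store C (.sub (α.app store) (α.app load))

/-- `𝒞` is closed under T-Left, T-Right and T-Prefix. -/
def ClosedTLRP {V L : Type} (C : Set (Constraint V L)) : Prop :=
  (∀ α β : DTV V L, Constraint.sub α β ∈ C →
      Constraint.var α ∈ C ∧ Constraint.var β ∈ C) ∧
  (∀ (α : DTV V L) (ℓ : L), Constraint.var (α.app ℓ) ∈ C →
      Constraint.var α ∈ C)

/-- Extending a derived type variable by a word: `α.w`. -/
def DTV.ext {V L : Type} (α : DTV V L) (w : List L) : DTV V L :=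
  ⟨α.base, α.word ++ w⟩

theorem DTV.ext_nil {V L : Type} (α : DTV V L) : α.ext [] = α := by
  simp [DTV.ext]

theorem DTV.ext_cons {V L : Type} (α : DTV V L) (ℓ : L) (w : List L) :
    α.ext (ℓ :: w) = (α.app ℓ).ext w := by
  simp [DTV.ext, DTV.app]

/-- Iterated T-Prefix: if `α.w` exists then so does `α`. -/
theorem Entails.var_of_var_ext {V L : Type} {sgn : L → Sign} {load store : L}
    {C : Set (Constraint V L)} {α : DTV V L} {w : List L}
    (h : Entails sgn load store C (.var (α.ext w))) :
    Entails sgn load store C (.var α) := by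
  induction w generalizing α with
  | nil => rwa [DTV.ext_nil] at h
  | cons ℓ w ih =>
    rw [DTV.ext_cons] at h
    exact .tPrefix (ih h)

/-- two types in a subtype relation have exactly the same set of
capabilities: if `𝒞 ⊢ α ⊑ β`, then for every word `w ∈ Σ*`,
`𝒞 ⊢ VAR α.w` if and only if `𝒞 ⊢ VAR β.w`. -/
theorem entails_var_ext_iff_of_sub {V L : Type} (sgn : L → Sign)
    (load store : L) (hload : sgn load = .pos) (hstore : sgn store = .neg)
    (C : Set (Constraint V L)) (α β : DTV V L)
    (h : Entails sgn load store C (.sub α β)) (w : List L) :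
    Entails sgn load store C (.var (α.ext w)) ↔
      Entails sgn load store C (.var (β.ext w)) := by
  induction w generalizing α β with
  | nil =>
    rw [DTV.ext_nil, DTV.ext_nil]
    exact ⟨fun _ => .tRight h, fun _ => .tLeft h⟩
  | cons ℓ w ih =>
    rw [DTV.ext_cons, DTV.ext_cons]
    have iff_of_var (hβ : Entails sgn load store C (.var (β.app ℓ))) :
        Entails sgn load store C (.var ((α.app ℓ).ext w)) ↔
          Entails sgn load store C (.var ((β.app ℓ).ext w)) := by
      cases hs : sgn ℓ with
      | pos => exact ih _ _ (.sFieldPos h hβ hs)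
      | neg => exact (ih _ _ (.sFieldNeg h hβ hs)).symm
    exact ⟨fun hw => (iff_of_var (.tInheritL h hw.var_of_var_ext)).mp hw,
      fun hw => (iff_of_var hw.var_of_var_ext).mpr hw⟩
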